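/- Let β ∈ 𝔽_q((1/z)) be a formal Laurent series of positive degree. Then the following statements are equivalent: (i) β is algebraic over 𝔽_q(z); (ii) the β-expansion d_β(1) of 1 is p-automatic; (iii) for every x ∈ 𝔽_q[[1/z]], the β-expansion d_β(x) is p-automatic if and only if x is algebraic over 𝔽_q(z). -/

import Mathlib

/-!
`β`-expansions of formal Laurent series.  The field `𝔽_q((1/z))` is modelled as
the field of Laurent series `LaurentSeries F = HahnSeries ℤ F` over a finite
field `F` of cardinality `q`, with variable `X = 1/z`; then `deg x = -x.order`,
the subring `𝔽_q[[1/z]]` is `{x | 0 ≤ x.order}`, and `𝔽_q(z) = 𝔽_q(1/z)` is the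
field `RatFunc F` of rational functions.
-/

/-- A sequence `b : ℕ → α` is `k`-automatic if its `k`-kernel
`{ (b (n k^i + j))_n : i ≥ 0, 0 ≤ j < k^i }` is finite. -/
def IsKAutomatic {α : Type*} (k : ℕ) (b : ℕ → α) : Prop :=
  {c : ℕ → α | ∃ i j : ℕ, j < k ^ i ∧ c = fun n => b (n * k ^ i + j)}.Finite

/-- The integer part `[x]` of a Laurent series in `𝔽_q((1/z))`: the sum of the
terms involving nonnegative powers of `z` (i.e. nonpositive powers of the
variable `X = 1/z`); it corresponds to a polynomial in `z`. -/
noncomputable def intPart {F : Type*} [Field F] (x : LaurentSeries F) : LaurentSeries F where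
  coeff n := if n ≤ 0 then x.coeff n else 0
  isPWO_support' := x.isPWO_support'.mono (by
    intro n hn
    simp only [Function.mem_support, ne_eq] at hn ⊢
    intro h
    apply hn
    simp [h])

/-- The `β`-transformation `T(x) = βx - [βx]` on `𝔽_q[[1/z]]`. -/
noncomputable def betaT {F : Type*} [Field F] (β : LaurentSeries F) (x : LaurentSeries F) :
    LaurentSeries F :=
  β * x - intPart (β * x)

/-- The digit sequence `d_β(x) = {a_n}_{n ≥ 1}` of the `β`-expansion of `x`
(reindexed from `0`):  `betaDigits β x n = a_{n+1} = [β ⬝ Tⁿ(x)]`. -/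
noncomputable def betaDigits {F : Type*} [Field F] (β x : LaurentSeries F) :
    ℕ → LaurentSeries F :=
  fun n => intPart (β * (betaT β)^[n] x)

open scoped RatFunc

/-!
Let `d = deg β`, let `D_j` be the power series whose coefficients are the coefficients of `z ^ j` in
the digits of `x`, and let `σ` be the substitution `X ↦ β⁻¹` on Laurent series. The `β`-expansion
says `β x = ∑_{j ≤ d} z ^ j σ(D_j)`, and by Christol's theorem `d_β(x)` is `p`-automatic iff every
`D_j` is algebraic over `F(X)`, that is, iff every `σ(D_j)` is algebraic over `F(β⁻¹)`.

If `d_β(1)` is automatic, the expansion of `1` is therefore a nontrivial algebraic equation for `z`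
over `F(β⁻¹)`, so `β` is algebraic over `F(z)`. Conversely, if `β` is algebraic, then being
algebraic over `F(X)` and over `F(β⁻¹)` is the same, so automatic digits yield an algebraic `x`. If
`x` is algebraic, then so is `f = ∑_{j < d} z ^ j σ(D_j)`, since `D_d` is constant. As `σ`
multiplies orders by `d`, the powers `1, …, z ^ (d - 1)` are linearly independent over the image of
`σ`; with `q = #F`, comparing coordinates in a linear relation expressing `f` through
`f ^ q, f ^ q ^ 2, …` expresses each `σ(D_j)` linearly through the iterated `q`-th powers of all of
them, and finite systems of such relations have only algebraic solutions.
-/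

open scoped IntermediateField LaurentSeries PowerSeries

theorem exists_mem_span_pow_pow_of_isAlgebraic {E L : Type*} [Field E] [Field L] [Algebra E L]
    (q : ℕ) (hLI : ∀ (n : ℕ) (v : Fin n → L), LinearIndependent E v →
      LinearIndependent E fun i => v i ^ q)
    {f : L} (hf : IsAlgebraic E f) :
    ∃ n : ℕ, f ∈ Submodule.span E
      (Set.range fun i : Fin n => f ^ q ^ ((i : ℕ) + 1)) := by
  by_contra! hnot
  have hind (n : ℕ) : LinearIndependent E fun i : Fin n => f ^ q ^ (i : ℕ) := by
    induction n with
    | zero => exact linearIndependent_empty_type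
    | succ n ih =>
      rw [linearIndependent_finSucc]
      refine ⟨?_, ?_⟩
      · simpa [Fin.tail_def, pow_succ, pow_mul] using hLI n _ ih
      · simpa [Fin.tail_def] using hnot n
  set W := (Algebra.adjoin E {f}).toSubmodule
  have : Module.Finite E W := .of_fg hf.isIntegral.fg_adjoin_singleton
  have hmem (k : ℕ) : f ^ q ^ k ∈ W :=
    pow_mem (Algebra.self_mem_adjoin_singleton E f) _
  have hle (n : ℕ) : n ≤ Module.finrank E W := by
    simpa [finrank_span_eq_card (hind n)] using
      Submodule.finrank_mono (Submodule.span_le.2 (Set.range_subset_iff.2 fun i : Fin n => hmem i))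
  exact (hle _).not_gt (Nat.lt_succ_self _)

section FrobeniusSpan

variable (F : Type*) [Field F] [Fintype F]
variable {E L : Type*} [Field E] [Field L] [Algebra F L] [Algebra E L]

lemma sum_pow_card_pow {ι : Type*} (k : ℕ) (s : Finset ι) (f : ι → L) :
    (∑ i ∈ s, f i) ^ Fintype.card F ^ k = ∑ i ∈ s, f i ^ Fintype.card F ^ k := by
  simpa only [AlgHom.coe_pow, FiniteField.coe_frobeniusAlgHom, pow_iterate] using
    map_sum (FiniteField.frobeniusAlgHom F L ^ k) f s

lemma pow_card_mem_span_range {ι : Type*} [Finite ι] {v : ι → L} {x : L}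
    (hx : x ∈ Submodule.span E (Set.range v)) :
    x ^ Fintype.card F ∈ Submodule.span E (Set.range fun i => v i ^ Fintype.card F) := by
  have := Fintype.ofFinite ι
  obtain ⟨c, rfl⟩ := (Submodule.mem_span_range_iff_exists_fun E).1 hx
  rw [← pow_one (Fintype.card F), sum_pow_card_pow]
  refine Submodule.sum_mem _ fun i _ => ?_
  simpa only [pow_one, smul_pow] using
    Submodule.smul_mem _ _ (Submodule.subset_span (Set.mem_range_self i))

lemma span_pow_card_pow_mono {ι : Type*} [Finite ι] {v : ι → L}
    (hv : ∀ i, v i ∈ Submodule.span E (Set.range fun j => v j ^ Fintype.card F)) :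
    Monotone fun k => Submodule.span E (Set.range fun i => v i ^ Fintype.card F ^ k) := by
  refine monotone_nat_of_le_succ fun k => ?_
  rw [Submodule.span_le, Set.range_subset_iff]
  intro i
  induction k with
  | zero => simpa using hv i
  | succ k ih =>
    rw [SetLike.mem_coe] at ih ⊢
    simpa only [← pow_mul, ← pow_succ] using pow_card_mem_span_range F ih

lemma linearIndependent_pow_of_transcendental {u : L} (hu : Transcendental E u) :
    LinearIndependent E fun n : ℕ => u ^ n := by
  have := (Polynomial.basisMonomials E).linearIndependent.map' (Polynomial.aeval u).toLinearMap
    (LinearMap.ker_eq_bot.2 (transcendental_iff_injective.1 hu))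
  simpa [Function.comp_def, Polynomial.aeval_monomial] using this

-- The spans of the iterated `q`-th powers of `v` increase with dimension at most `Nat.card ι`,
-- but together they contain all the powers `v i ^ q ^ k`.
theorem isAlgebraic_of_mem_span_pow_card {ι : Type*} [Finite ι] {v : ι → L}
    (hv : ∀ i, v i ∈ Submodule.span E (Set.range fun j => v j ^ Fintype.card F)) (i : ι) :
    IsAlgebraic E (v i) := by
  have := Fintype.ofFinite ι
  set N := Fintype.card ι
  set w : ι → L := fun j => v j ^ Fintype.card F ^ N
  by_contra htrans
  have hmem (k : Fin (N + 1)) :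
      v i ^ Fintype.card F ^ (k : ℕ) ∈ Submodule.span E (Set.range w) :=
    span_pow_card_pow_mono F hv (Nat.lt_succ_iff.1 k.2) (Submodule.subset_span ⟨i, rfl⟩)
  have hpow : LinearIndependent E fun k : Fin (N + 1) => v i ^ Fintype.card F ^ (k : ℕ) :=
    (linearIndependent_pow_of_transcendental htrans).comp _
      ((Nat.pow_right_injective Fintype.one_lt_card).comp Fin.val_injective)
  have : Module.Finite E (Submodule.span E (Set.range w)) :=
    Module.Finite.span_of_finite E (Set.finite_range w)
  have hlower : N + 1 ≤ Module.finrank E (Submodule.span E (Set.range w)) := by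
    simpa [finrank_span_eq_card hpow] using
      Submodule.finrank_mono (Submodule.span_le.2 (Set.range_subset_iff.2 hmem))
  have hupper : Module.finrank E (Submodule.span E (Set.range w)) ≤ N := finrank_range_le_card w
  omega

end FrobeniusSpan

section Orders

lemma hahnSeries_eq_zero_of_sum_eq_zero {Γ R ι : Type*} [LinearOrder Γ] [Zero Γ] [AddCommMonoid R]
    {s : Finset ι} {f : ι → HahnSeries Γ R}
    (hord : ∀ i ∈ s, ∀ j ∈ s, f i ≠ 0 → f j ≠ 0 → (f i).order = (f j).order → i = j)
    (hsum : ∑ i ∈ s, f i = 0) : ∀ i ∈ s, f i = 0 := by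
  classical
  by_contra! hne
  obtain ⟨i, hi, hmin⟩ := ({i ∈ s | f i ≠ 0}).exists_min_image (fun i => (f i).order)
    (by simpa [Finset.Nonempty] using hne)
  rw [Finset.mem_filter] at hi
  refine (HahnSeries.coeff_order_eq_zero.not.2 hi.2) ?_
  calc (f i).coeff (f i).order = (∑ j ∈ s, f j).coeff (f i).order := by
        rw [HahnSeries.coeff_sum, Finset.sum_eq_single_of_mem i hi.1]
        intro j hj hji
        by_cases hj0 : f j = 0
        · simp [hj0]
        have hle := hmin j (Finset.mem_filter.2 ⟨hj, hj0⟩)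
        exact HahnSeries.coeff_eq_zero_of_lt_order
          (hle.lt_of_ne fun h => hji (hord i hi.1 j hj hi.2 hj0 h).symm)
    _ = 0 := by simp [hsum]

lemma laurentSeries_eq_zero_of_sum_single_mul_eq_zero {R ι : Type*} [Ring R] [IsDomain R]
    {d : ℤ} {s : Finset ι} {e : ι → ℤ} (he : ∀ i ∈ s, ∀ j ∈ s, d ∣ e i - e j → i = j)
    {g : ι → R⸨X⸩} (hg : ∀ i ∈ s, d ∣ (g i).order)
    (hsum : ∑ i ∈ s, HahnSeries.single (e i) 1 * g i = 0) : ∀ i ∈ s, g i = 0 := by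
  have hsingle (i : ι) : (HahnSeries.single (e i) 1 : R⸨X⸩) ≠ 0 := by simp
  have horder (i : ι) (hi : HahnSeries.single (e i) 1 * g i ≠ 0) :
      (HahnSeries.single (e i) 1 * g i).order = e i + (g i).order := by
    rw [HahnSeries.order_mul (hsingle i) (right_ne_zero_of_mul hi),
      HahnSeries.order_single one_ne_zero]
  intro i hi
  refine (mul_eq_zero.1 (hahnSeries_eq_zero_of_sum_eq_zero ?_ hsum i hi)).resolve_left (hsingle i)
  intro i hi j hj hi0 hj0 hij
  rw [horder i hi0, horder j hj0] at hij
  refine he i hi j hj ?_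
  have : e i - e j = (g j).order - (g i).order := by omega
  exact this ▸ dvd_sub (hg j hj) (hg i hi)

end Orders

section Cartier

/-- The Cartier operator `∑ aₙ Xⁿ ↦ ∑ a_{qn+r} Xⁿ` on power series, i.e. extraction of one section
of the coefficient sequence. -/
noncomputable def cartier {R : Type*} [Semiring R] (q r : ℕ) (f : R⟦X⟧) : R⟦X⟧ :=
  PowerSeries.mk fun n => PowerSeries.coeff (q * n + r) f

@[simp]
lemma coeff_cartier {R : Type*} [Semiring R] (q r n : ℕ) (f : R⟦X⟧) :
    PowerSeries.coeff n (cartier q r f) = PowerSeries.coeff (q * n + r) f :=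
  PowerSeries.coeff_mk _ _

@[simp]
lemma cartier_zero {R : Type*} [Semiring R] (q r : ℕ) : cartier q r (0 : R⟦X⟧) = 0 := by
  ext n
  simp

lemma sum_X_pow_mul_expand_cartier {R : Type*} [CommRing R] {q : ℕ} (hq : q ≠ 0) (f : R⟦X⟧) :
    ∑ r ∈ Finset.range q, PowerSeries.X ^ r * PowerSeries.expand q hq (cartier q r f) = f := by
  ext n
  have hmod := Nat.mod_lt n (Nat.pos_of_ne_zero hq)
  rw [map_sum, Finset.sum_eq_single_of_mem _ (Finset.mem_range.2 hmod)]
  · rw [PowerSeries.coeff_X_pow_mul', if_pos (Nat.mod_le n q), PowerSeries.coeff_expand,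
      if_pos (Nat.dvd_sub_mod n), coeff_cartier, Nat.mul_div_cancel' (Nat.dvd_sub_mod n),
      Nat.sub_add_cancel (Nat.mod_le n q)]
  · intro r hr hrn
    rw [PowerSeries.coeff_X_pow_mul', PowerSeries.coeff_expand]
    refine ite_eq_right_iff.2 fun hle => if_neg fun hdvd => hrn ?_
    rw [← Nat.mod_eq_of_lt (Finset.mem_range.1 hr)]
    exact (Nat.modEq_iff_dvd' hle).2 hdvd

end Cartier

section CartierFinite
open Polynomial

lemma exists_polynomial_coe_eq_cartier {R : Type*} [Semiring R] {q : ℕ} (hq : q ≠ 0) (r : ℕ)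
    (P : R[X]) : ∃ Q : R[X], (Q : R⟦X⟧) = cartier q r P ∧ q * Q.natDegree ≤ P.natDegree := by
  have hcoeff (n : ℕ) : (PowerSeries.trunc (P.natDegree + 1) (cartier q r (P : R⟦X⟧))).coeff n
      = P.coeff (q * n + r) := by
    rw [PowerSeries.coeff_trunc, coeff_cartier, Polynomial.coeff_coe, ite_eq_left_iff]
    intro hn
    have : n ≤ q * n := Nat.le_mul_of_pos_left n (Nat.pos_of_ne_zero hq)
    exact (coeff_eq_zero_of_natDegree_lt (by omega)).symm
  set Q := PowerSeries.trunc (P.natDegree + 1) (cartier q r (P : R⟦X⟧))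
  refine ⟨Q, ?_, ?_⟩
  · ext n
    rw [Polynomial.coeff_coe, hcoeff, coeff_cartier, Polynomial.coeff_coe]
  · by_contra! hlt
    refine hlt.ne_bot ?_
    have hlead : Q.leadingCoeff = 0 :=
      (hcoeff _).trans (coeff_eq_zero_of_natDegree_lt (by omega))
    simp [leadingCoeff_eq_zero.1 hlead]

lemma algebraMap_polynomial_laurentSeries {R : Type*} [CommRing R] (P : R[X]) :
    algebraMap R[X] R⸨X⸩ P = ((P : R⟦X⟧) : R⸨X⸩) := by
  simp [Polynomial.algebraMap_hahnSeries_apply]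

variable {F : Type*} [Field F] [Fintype F]

lemma powerSeries_pow_card (g : F⟦X⟧) :
    g ^ Fintype.card F = PowerSeries.expand (Fintype.card F) Fintype.card_ne_zero g := by
  obtain ⟨p, _⟩ := CharP.exists F
  obtain ⟨s, hprime, hs⟩ := FiniteField.card F p
  have : ExpChar F p := ExpChar.prime hprime
  have hfrob : iterateFrobenius F p s = RingHom.id F := by
    ext x
    simp [iterateFrobenius_def, ← hs, FiniteField.pow_card]
  have := MvPowerSeries.map_iterateFrobenius_expand p hprime.ne_zero g s
  rw [hfrob, MvPowerSeries.map_id, RingHom.id_apply] at this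
  simp only [hs, PowerSeries.expand, this]

lemma sum_single_mul_cartier_pow (f : F⟦X⟧) :
    ∑ r ∈ Finset.range (Fintype.card F),
      HahnSeries.single (r : ℤ) 1 * (cartier (Fintype.card F) r f : F⸨X⸩) ^ Fintype.card F =
        (f : F⸨X⸩) := by
  conv_rhs => rw [← sum_X_pow_mul_expand_cartier (q := Fintype.card F) Fintype.card_ne_zero f]
  simp only [← powerSeries_pow_card, map_sum, map_mul, HahnSeries.ofPowerSeries_X_pow]
  simp only [map_pow]

-- Terms in different residue classes mod `q` cannot cancel.
theorem cartier_eq_sum_of_eq_sum_mul_pow_card {ι : Type*} {s : Finset ι} {y : F⟦X⟧}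
    {P : ι → F⟦X⟧} {v : ι → F⸨X⸩} (h : (y : F⸨X⸩) = ∑ i ∈ s, (P i : F⸨X⸩) * v i ^ Fintype.card F)
    {r : ℕ} (hr : r < Fintype.card F) :
    (cartier (Fintype.card F) r y : F⸨X⸩) =
      ∑ i ∈ s, (cartier (Fintype.card F) r (P i) : F⸨X⸩) * v i := by
  set q := Fintype.card F
  let g (r : ℕ) : F⸨X⸩ := cartier q r y - ∑ i ∈ s, (cartier q r (P i) : F⸨X⸩) * v i
  have hpow (r : ℕ) : g r ^ q =
      (cartier q r y : F⸨X⸩) ^ q - ∑ i ∈ s, (cartier q r (P i) : F⸨X⸩) ^ q * v i ^ q := by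
    simp_rw [← mul_pow]
    rw [← pow_one q, ← sum_pow_card_pow, pow_one]
    exact map_sub (FiniteField.frobeniusAlgHom F F⸨X⸩) _ _
  have hsum : ∑ r ∈ Finset.range q, HahnSeries.single (r : ℤ) 1 * g r ^ q = 0 := by
    simp_rw [hpow, mul_sub, Finset.sum_sub_distrib, Finset.mul_sum, ← mul_assoc]
    rw [Finset.sum_comm]
    simp_rw [← Finset.sum_mul]
    rw [sum_single_mul_cartier_pow, h, sub_eq_zero]
    simp_rw [q, sum_single_mul_cartier_pow]
  refine sub_eq_zero.1 (pow_eq_zero_iff Fintype.card_ne_zero |>.1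
    (laurentSeries_eq_zero_of_sum_single_mul_eq_zero (d := q) ?_ ?_ hsum r (Finset.mem_range.2 hr)))
  · intro i hi j hj hij
    rw [Finset.mem_range] at hi hj
    have := Int.eq_zero_of_abs_lt_dvd hij (by rw [abs_lt]; omega)
    omega
  · intro i _
    simp [HahnSeries.order_pow]

lemma linearIndependent_ratFunc_pow_card {ι : Type*} {v : ι → F⸨X⸩}
    (hv : LinearIndependent F⟮X⟯ v) : LinearIndependent F⟮X⟯ fun i => v i ^ Fintype.card F := by
  rw [← LinearIndependent.iff_fractionRing F[X], linearIndependent_iff'] at hv ⊢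
  intro s P hP i hi
  choose Q hQ _ using fun r i => exists_polynomial_coe_eq_cartier (q := Fintype.card F)
    Fintype.card_ne_zero r (P i)
  have hsum : ((0 : F⟦X⟧) : F⸨X⸩) =
      ∑ i ∈ s, ((P i : F⟦X⟧) : F⸨X⸩) * v i ^ Fintype.card F := by
    simpa [Algebra.smul_def, algebraMap_polynomial_laurentSeries, eq_comm] using hP
  have hzero (r : ℕ) (hr : r < Fintype.card F) : cartier (Fintype.card F) r (P i : F⟦X⟧) = 0 := by
    have hrel := cartier_eq_sum_of_eq_sum_mul_pow_card hsum hr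
    rw [← hQ, hv s (Q r) ?_ i hi, Polynomial.coe_zero]
    simpa [Algebra.smul_def, algebraMap_polynomial_laurentSeries, hQ, eq_comm] using hrel
  rw [← Polynomial.coe_eq_zero_iff,
    ← sum_X_pow_mul_expand_cartier (q := Fintype.card F) Fintype.card_ne_zero (P i : F⟦X⟧)]
  exact Finset.sum_eq_zero fun r hr => by simp [hzero r (Finset.mem_range.1 hr)]

end CartierFinite

section Automatic

variable {α : Type*} {k : ℕ}

theorem isKAutomatic_iff_exists_finite_stable {b : ℕ → α} :
    IsKAutomatic k b ↔ ∃ U : Set (ℕ → α), U.Finite ∧ b ∈ U ∧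
      ∀ c ∈ U, ∀ r < k, (fun n => c (k * n + r)) ∈ U := by
  refine ⟨fun h => ⟨_, h, ⟨0, 0, by simp⟩, ?_⟩, fun ⟨U, hU, hb, hstable⟩ => hU.subset ?_⟩
  · rintro _ ⟨i, j, hj, rfl⟩ r hr
    refine ⟨i + 1, r * k ^ i + j, ?_, funext fun n => congrArg b (by ring)⟩
    calc r * k ^ i + j < r * k ^ i + k ^ i := by omega
      _ = (r + 1) * k ^ i := by ring
      _ ≤ k ^ (i + 1) := pow_succ' k i ▸ Nat.mul_le_mul_right _ hr
  · rintro _ ⟨i, j, hj, rfl⟩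
    induction i generalizing j with
    | zero => simpa [Nat.lt_one_iff.1 (pow_zero k ▸ hj)] using hb
    | succ i ih =>
      have hpos : 0 < k ^ i := Nat.pos_of_ne_zero fun h0 => by simp [pow_succ, h0] at hj
      have hdiv : j / k ^ i < k := Nat.div_lt_of_lt_mul (pow_succ k i ▸ hj)
      convert hstable _ (ih (j % k ^ i) (Nat.mod_lt _ hpos)) _ hdiv using 3 with n
      calc n * k ^ (i + 1) + j = n * k ^ (i + 1) + (k ^ i * (j / k ^ i) + j % k ^ i) := by
            rw [Nat.div_add_mod]
        _ = (k * n + j / k ^ i) * k ^ i + j % k ^ i := by ring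

lemma IsKAutomatic.comp {α' : Type*} {b : ℕ → α} (h : IsKAutomatic k b) (g : α → α') :
    IsKAutomatic k fun n => g (b n) := by
  refine (h.image fun c n => g (c n)).subset ?_
  rintro _ ⟨i, j, hj, rfl⟩
  exact ⟨_, ⟨i, j, hj, rfl⟩, rfl⟩

lemma IsKAutomatic.pi {ι : Type*} [Finite ι] {α : ι → Type*} {b : ∀ i, ℕ → α i}
    (h : ∀ i, IsKAutomatic k (b i)) : IsKAutomatic k fun n i => b i n := by
  refine ((Set.Finite.pi' h).image fun c n i => c i n).subset ?_
  rintro _ ⟨i, j, hj, rfl⟩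
  exact ⟨fun l n => b l (n * k ^ i + j), fun l => ⟨i, j, hj, rfl⟩, rfl⟩

lemma IsKAutomatic.pow {b : ℕ → α} (h : IsKAutomatic k b) (s : ℕ) : IsKAutomatic (k ^ s) b := by
  refine h.subset ?_
  rintro _ ⟨i, j, hj, rfl⟩
  exact ⟨s * i, j, by rwa [pow_mul], by simp only [pow_mul]⟩

lemma IsKAutomatic.of_pow {s : ℕ} (hk : 0 < k) (hs : 0 < s) {b : ℕ → α}
    (h : IsKAutomatic (k ^ s) b) : IsKAutomatic k b := by
  have hfin : (⋃ t ∈ Finset.range s, ⋃ j ∈ Finset.range (k ^ t), (fun c n => c (n * k ^ t + j)) ''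
      {c | ∃ i j, j < (k ^ s) ^ i ∧ c = fun n => b (n * (k ^ s) ^ i + j)}).Finite :=
    (Finset.finite_toSet _).biUnion fun t _ => (Finset.finite_toSet _).biUnion fun j _ => h.image _
  refine hfin.subset ?_
  rintro _ ⟨i, j, hj, rfl⟩
  set Q := (k ^ s) ^ (i / s)
  have hi : k ^ i = k ^ (i % s) * Q := by
    simp only [Q, ← pow_mul, ← pow_add, Nat.mod_add_div]
  have hQ : 0 < Q := by positivity
  have hdiv : j / Q < k ^ (i % s) := (Nat.div_lt_iff_lt_mul hQ).2 (hi ▸ hj)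
  simp only [Set.mem_iUnion, Finset.mem_range]
  refine ⟨i % s, Nat.mod_lt _ hs, j / Q, hdiv, _, ⟨i / s, j % Q, Nat.mod_lt _ hQ, rfl⟩, ?_⟩
  refine funext fun n => congrArg b ?_
  calc (n * k ^ (i % s) + j / Q) * Q + j % Q
      = n * (k ^ (i % s) * Q) + (Q * (j / Q) + j % Q) := by ring
    _ = n * k ^ i + j := by rw [← hi, Nat.div_add_mod]

lemma isKAutomatic_pow_iff {s : ℕ} (hk : 0 < k) (hs : 0 < s) {b : ℕ → α} :
    IsKAutomatic (k ^ s) b ↔ IsKAutomatic k b :=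
  ⟨.of_pow hk hs, fun h => h.pow s⟩

end Automatic

section Christol
open Polynomial

variable {F : Type*} [Field F] [Fintype F]

lemma cartier_mk {R : Type*} [Semiring R] (q r : ℕ) (b : ℕ → R) :
    cartier q r (PowerSeries.mk b) = PowerSeries.mk fun n => b (q * n + r) := by
  ext n
  simp

lemma isAlgebraic_mk_of_isKAutomatic_card {b : ℕ → F} (hb : IsKAutomatic (Fintype.card F) b) :
    IsAlgebraic F⟮X⟯ (PowerSeries.mk b : F⸨X⸩) := by
  obtain ⟨U, hU, hbU, hstable⟩ := isKAutomatic_iff_exists_finite_stable.1 hb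
  have : Finite U := hU
  refine isAlgebraic_of_mem_span_pow_card F (E := F⟮X⟯)
    (v := fun c : U => (PowerSeries.mk c.1 : F⸨X⸩)) ?_ ⟨b, hbU⟩
  rintro ⟨c, hc⟩
  rw [← sum_single_mul_cartier_pow (PowerSeries.mk c)]
  refine Submodule.sum_mem _ fun r hr => ?_
  have hX : (HahnSeries.single (r : ℤ) 1 : F⸨X⸩) = algebraMap F⟮X⟯ F⸨X⸩ (RatFunc.X ^ r) := by
    rw [map_pow, RatFunc.coe_X, ← RatFunc.single_one_eq_pow]
  rw [hX, ← Algebra.smul_def, cartier_mk]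
  exact Submodule.smul_mem _ _ (Submodule.subset_span
    ⟨⟨_, hstable c hc r (Finset.mem_range.1 hr)⟩, rfl⟩)

theorem exists_mem_span_pow_card_pow {f : F⸨X⸩} (hf : IsAlgebraic F⟮X⟯ f) :
    ∃ n : ℕ, f ∈ Submodule.span F⟮X⟯
      (Set.range fun i : Fin n => f ^ Fintype.card F ^ ((i : ℕ) + 1)) :=
  exists_mem_span_pow_pow_of_isAlgebraic _ (fun _ _ => linearIndependent_ratFunc_pow_card) hf

lemma exists_smul_eq_sum_smul_pow_card_pow {f : F⸨X⸩} (hf : IsAlgebraic F⟮X⟯ f) :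
    ∃ (n : ℕ) (A : F[X]) (E : Fin n → F[X]) (g : F⸨X⸩),
      f = A • g ∧ g = ∑ i, E i • g ^ Fintype.card F ^ ((i : ℕ) + 1) := by
  obtain ⟨n, hn⟩ := exists_mem_span_pow_card_pow hf
  obtain ⟨c, hc⟩ := (Submodule.mem_span_range_iff_exists_fun F⟮X⟯).1 hn
  obtain ⟨A, hA⟩ := IsLocalization.exist_integer_multiples_of_finite (nonZeroDivisors F[X]) c
  choose B hB using hA
  set a := algebraMap F[X] F⸨X⸩ A
  have ha : a ≠ 0 :=
    (map_ne_zero_iff _ (FaithfulSMul.algebraMap_injective _ _)).2 (nonZeroDivisors.coe_ne_zero A)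
  have hBc (i : Fin n) : algebraMap F[X] F⸨X⸩ (B i) = a * algebraMap F⟮X⟯ F⸨X⸩ (c i) := by
    rw [IsScalarTower.algebraMap_apply F[X] F⟮X⟯, hB, Algebra.smul_def, map_mul,
      ← IsScalarTower.algebraMap_apply]
  have htwo (i : Fin n) : 2 ≤ Fintype.card F ^ ((i : ℕ) + 1) :=
    Fintype.one_lt_card.trans_le (Nat.le_self_pow (Nat.succ_ne_zero _) _)
  refine ⟨n, A, fun i => B i * (A : F[X]) ^ (Fintype.card F ^ ((i : ℕ) + 1) - 2), a⁻¹ * f, ?_, ?_⟩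
  · rw [Algebra.smul_def, mul_inv_cancel_left₀ ha]
  · conv_lhs => rw [← hc, Finset.mul_sum]
    refine Finset.sum_congr rfl fun i _ => ?_
    obtain ⟨m, hm⟩ := Nat.exists_eq_add_of_le (htwo i)
    rw [Algebra.smul_def, Algebra.smul_def, map_mul, map_pow, hBc, hm, Nat.add_sub_cancel_left,
      mul_pow, inv_pow]
    change _ = a * _ * a ^ m * _
    field_simp
    ring

lemma finite_setOf_natDegree_le {R : Type*} [Semiring R] [Finite R] (N : ℕ) :
    {P : R[X] | P.natDegree ≤ N}.Finite := by
  refine Set.Finite.of_finite_image (f := fun P (i : Fin (N + 1)) => P.coeff i) (Set.toFinite _)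
    fun P hP Q hQ hPQ => Polynomial.ext fun m => ?_
  rcases lt_or_ge N m with hm | hm
  · rw [coeff_eq_zero_of_natDegree_lt (hP.trans_lt hm),
      coeff_eq_zero_of_natDegree_lt (hQ.trans_lt hm)]
  · exact congrFun hPQ ⟨m, Nat.lt_succ_of_le hm⟩

-- With `g = ∑ Eᵢ g ^ q ^ (i + 1)`, the combinations `∑ Dᵢ g ^ q ^ i` with `deg Dᵢ ≤ N` form a
-- finite set, and it is stable under the Cartier operators once `N` bounds the degrees of `Eᵢ`.
lemma exists_cartier_eq_sum_smul_pow_card_pow {n N : ℕ} {E : Fin n → F[X]} {g : F⸨X⸩}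
    (hg : g = ∑ i, E i • g ^ Fintype.card F ^ ((i : ℕ) + 1)) (hE : ∀ i, (E i).natDegree ≤ N)
    {D : Fin (n + 1) → F[X]} (hD : ∀ i, (D i).natDegree ≤ N) {f : F⟦X⟧}
    (hf : (f : F⸨X⸩) = ∑ i, D i • g ^ Fintype.card F ^ (i : ℕ)) {r : ℕ} (hr : r < Fintype.card F) :
    ∃ D' : Fin (n + 1) → F[X], (∀ i, (D' i).natDegree ≤ N) ∧
      (cartier (Fintype.card F) r f : F⸨X⸩) = ∑ i, D' i • g ^ Fintype.card F ^ (i : ℕ) := by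
  let P (i : Fin n) : F[X] := D 0 * E i + D i.succ
  have hP (i : Fin n) : (P i).natDegree ≤ N + N :=
    natDegree_add_le_of_degree_le (natDegree_mul_le_of_le (hD 0) (hE i))
      ((hD i.succ).trans (by omega))
  choose Q hQ hQdeg using fun i => exists_polynomial_coe_eq_cartier (q := Fintype.card F)
    Fintype.card_ne_zero r (P i)
  have hfP : (f : F⸨X⸩) = ∑ i, ((P i : F⟦X⟧) : F⸨X⸩) *
      (g ^ Fintype.card F ^ (i : ℕ)) ^ Fintype.card F := by
    have hg0 : D 0 • g = ∑ i, (D 0 * E i) • g ^ Fintype.card F ^ ((i : ℕ) + 1) := by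
      conv_lhs => rw [hg, Finset.smul_sum]
      simp only [mul_smul]
    simp only [← algebraMap_polynomial_laurentSeries, ← Algebra.smul_def, ← pow_mul, ← pow_succ, P,
      add_smul, Finset.sum_add_distrib]
    rw [hf, Fin.sum_univ_succ, ← hg0]
    simp
  refine ⟨Fin.snoc Q 0, fun i => ?_, ?_⟩
  · refine Fin.lastCases (by simp) (fun i => ?_) i
    have : 2 * (Q i).natDegree ≤ Fintype.card F * (Q i).natDegree :=
      Nat.mul_le_mul_right _ Fintype.one_lt_card
    have := hQdeg i
    have := hP i
    simp only [Fin.snoc_castSucc]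
    omega
  · rw [cartier_eq_sum_of_eq_sum_mul_pow_card hfP hr, Fin.sum_univ_castSucc]
    simp [Algebra.smul_def, hQ]

lemma isKAutomatic_card_of_isAlgebraic_mk {b : ℕ → F}
    (hb : IsAlgebraic F⟮X⟯ (PowerSeries.mk b : F⸨X⸩)) : IsKAutomatic (Fintype.card F) b := by
  obtain ⟨n, A, E, g, hA, hg⟩ := exists_smul_eq_sum_smul_pow_card_pow hb
  let N := A.natDegree + ∑ i, (E i).natDegree
  have hE (i : Fin n) : (E i).natDegree ≤ N :=
    le_add_left (Finset.single_le_sum_of_canonicallyOrdered (f := fun i => (E i).natDegree)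
      (Finset.mem_univ i))
  let Ω : Set F⸨X⸩ := (fun D : Fin (n + 1) → F[X] => ∑ i, D i • g ^ Fintype.card F ^ (i : ℕ)) ''
    {D | ∀ i, (D i).natDegree ≤ N}
  have hΩ : Ω.Finite := (Set.Finite.pi' fun _ => finite_setOf_natDegree_le N).image _
  have hinj : Function.Injective fun c : ℕ → F => (PowerSeries.mk c : F⸨X⸩) := fun c c' h =>
    funext fun n => by simpa using PowerSeries.ext_iff.1 (HahnSeries.ofPowerSeries_injective h) n
  refine isKAutomatic_iff_exists_finite_stable.2
    ⟨{c | (PowerSeries.mk c : F⸨X⸩) ∈ Ω}, hΩ.preimage hinj.injOn, ?_, ?_⟩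
  · refine ⟨Fin.cons A 0, Fin.cases (Nat.le_add_right _ _) fun i => by simp, ?_⟩
    simp [Fin.sum_univ_succ, hA]
  · rintro c ⟨D, hD, hDc⟩ r hr
    obtain ⟨D', hD', hcartier⟩ := exists_cartier_eq_sum_smul_pow_card_pow hg hE hD hDc.symm hr
    rw [cartier_mk] at hcartier
    exact ⟨D', hD', hcartier.symm⟩

theorem isKAutomatic_iff_isAlgebraic_mk {F : Type*} [Field F] [Finite F] (p : ℕ) [CharP F p]
    {b : ℕ → F} : IsKAutomatic p b ↔ IsAlgebraic F⟮X⟯ (PowerSeries.mk b : F⸨X⸩) := by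
  have := Fintype.ofFinite F
  obtain ⟨s, hp, hs⟩ := FiniteField.card F p
  rw [← isKAutomatic_pow_iff hp.pos s.pos, ← hs]
  exact ⟨isAlgebraic_mk_of_isKAutomatic_card, isKAutomatic_card_of_isAlgebraic_mk⟩

end Christol

section Coordinates

variable (F : Type*) [Field F] [Fintype F]
variable {E K L ι : Type*} [Field E] [Field K] [Field L] [Algebra F K] [Algebra F L]
  [Algebra E K] [Algebra E L] [Algebra K L] [IsScalarTower E K L]

lemma isAlgebraic_of_mem_span_pow_card_pow_succ [Finite ι] {n : ℕ} {h : ι → K}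
    (hspan : ∀ l, h l ∈ Submodule.span E
      (Set.range fun ij : Fin n × ι => h ij.2 ^ Fintype.card F ^ ((ij.1 : ℕ) + 1))) (l : ι) :
    IsAlgebraic E (h l) := by
  let v (ij : Fin (n + 1) × ι) : K := h ij.2 ^ Fintype.card F ^ (ij.1 : ℕ)
  suffices hv : ∀ ij, v ij ∈ Submodule.span E (Set.range fun ij => v ij ^ Fintype.card F) by
    simpa [v] using isAlgebraic_of_mem_span_pow_card F hv (0, l)
  have hpow (i : Fin n) (j : ι) : h j ^ Fintype.card F ^ ((i : ℕ) + 1) ∈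
      Submodule.span E (Set.range fun ij => v ij ^ Fintype.card F) :=
    Submodule.subset_span ⟨(i.castSucc, j), by simp only [v, Fin.val_castSucc, ← pow_mul, pow_succ]⟩
  rintro ⟨i, j⟩
  refine Fin.cases ?_ (fun i => hpow i j) i
  have hle := Submodule.span_le.2 (Set.range_subset_iff.2 fun ij : Fin n × ι => hpow ij.1 ij.2)
  simpa [v] using hle (hspan j)

theorem isAlgebraic_coord_of_eq_sum_mul_pow_card_pow [Fintype ι] {b : ι → L}
    (hb : LinearIndependent K b) {A : Subalgebra E L} (hbA : ∀ j, b j ∈ A)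
    (hA : A.toSubmodule ≤ Submodule.span E (Set.range b)) {n : ℕ} {c : Fin n → L}
    (hc : ∀ i, c i ∈ A) {h : ι → K}
    (hsum : ∑ j, h j • b j = ∑ i, c i * (∑ j, h j • b j) ^ Fintype.card F ^ ((i : ℕ) + 1)) (l : ι) :
    IsAlgebraic E (h l) := by
  have hcoord (i : Fin n) (j : ι) : ∃ e : ι → E,
      ∑ l, e l • b l = c i * b j ^ Fintype.card F ^ ((i : ℕ) + 1) :=
    (Submodule.mem_span_range_iff_exists_fun E).1 (hA (A.mul_mem (hc i) (A.pow_mem (hbA j) _)))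
  choose e he using hcoord
  have hterm (i : Fin n) (j : ι) : c i * (h j • b j) ^ Fintype.card F ^ ((i : ℕ) + 1) =
      ∑ l, (e i j l • h j ^ Fintype.card F ^ ((i : ℕ) + 1)) • b l := by
    rw [smul_pow, mul_smul_comm, ← he, Finset.smul_sum]
    exact Finset.sum_congr rfl fun l _ => by rw [smul_comm, smul_assoc]
  have hexp : ∑ l, h l • b l =
      ∑ l, (∑ i, ∑ j, e i j l • h j ^ Fintype.card F ^ ((i : ℕ) + 1)) • b l := by
    rw [hsum]
    simp_rw [sum_pow_card_pow F, Finset.mul_sum, hterm, Finset.sum_smul]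
    exact (Finset.sum_congr rfl fun i _ => Finset.sum_comm).trans Finset.sum_comm
  have hrel (l : ι) : h l = ∑ i, ∑ j, e i j l • h j ^ Fintype.card F ^ ((i : ℕ) + 1) :=
    Fintype.linearIndependent_iffₛ.1 hb _ _ hexp l
  refine isAlgebraic_of_mem_span_pow_card_pow_succ F (n := n) (fun l => ?_) l
  rw [hrel l]
  exact Submodule.sum_mem _ fun i _ => Submodule.sum_mem _ fun j _ =>
    Submodule.smul_mem _ _ (Submodule.subset_span ⟨(i, j), rfl⟩)

variable {k : Type*} [Field k] [Algebra k K] [Algebra k L] [IsScalarTower k K L]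

open Polynomial IntermediateField

lemma exists_monic_map_algebraicClosure_eq_minpoly {θ : L} (hθ : IsAlgebraic k θ) :
    ∃ m : (algebraicClosure k K)[X], m.Monic ∧ m.map (algebraMap _ K) = minpoly K θ := by
  have hint : IsIntegral k θ := hθ.isIntegral
  have hlifts : minpoly K θ ∈ lifts (algebraMap (algebraicClosure k K) K) := by
    rw [lifts_iff_coeff_lifts]
    intro i
    have := isIntegral_coeff_of_dvd (minpoly k θ) (minpoly K θ) (minpoly.monic hint)
      (minpoly.monic hint.tower_top) (minpoly.dvd_map_of_isScalarTower k K θ) i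
    exact ⟨⟨_, mem_algebraicClosure_iff.2 this.isAlgebraic⟩, rfl⟩
  obtain ⟨m, hmap, _, hmonic⟩ :=
    lifts_and_degree_eq_and_monic hlifts (minpoly.monic hint.tower_top)
  exact ⟨m, hmonic, hmap⟩

-- The minimal polynomial of `θ` over `K` is defined over the algebraic closure `E` of `k` in `K`,
-- so the powers of `θ` that form a `K`-basis of `K(θ)` also span `E(θ)` over `E`.
theorem isAlgebraic_coord_pow_of_eq_sum_mul_pow_card_pow {θ : L} (hθ : IsAlgebraic k θ) {d : ℕ}
    (hd : d ≤ (minpoly K θ).natDegree) {h : ℕ → K} {n : ℕ} {c : Fin n → L} (hc : ∀ i, c i ∈ k⟮θ⟯)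
    (hsum : ∑ j ∈ Finset.range d, h j • θ ^ j =
      ∑ i, c i * (∑ j ∈ Finset.range d, h j • θ ^ j) ^ Fintype.card F ^ ((i : ℕ) + 1))
    {j : ℕ} (hj : j < d) : IsAlgebraic k (h j) := by
  obtain ⟨m, hmonic, hmap⟩ := exists_monic_map_algebraicClosure_eq_minpoly (K := K) hθ
  have hdeg : (minpoly K θ).natDegree = m.natDegree := by rw [← hmap, hmonic.natDegree_map]
  have hm : aeval θ m = 0 := by rw [← aeval_map_algebraMap K, hmap, minpoly.aeval]
  rw [hdeg] at hd
  let b (j : Fin m.natDegree) : L := θ ^ (j : ℕ)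
  have hb : LinearIndependent K b := by
    have := linearIndependent_pow (K := K) θ
    rwa [hdeg] at this
  let A := Algebra.adjoin (algebraicClosure k K) {θ}
  have hA : A.toSubmodule ≤ Submodule.span (algebraicClosure k K) (Set.range b) := by
    classical
    rw [← Submodule.span_range_natDegree_eq_adjoin hmonic hm]
    refine Submodule.span_mono fun x hx => ?_
    obtain ⟨j, hj, rfl⟩ := Finset.mem_image.1 hx
    exact ⟨⟨j, Finset.mem_range.1 hj⟩, rfl⟩
  have hcA (i : Fin n) : c i ∈ A := by
    have hle : Algebra.adjoin k {θ} ≤ A.restrictScalars k :=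
      Algebra.adjoin_le (Set.singleton_subset_iff.2 (Algebra.self_mem_adjoin_singleton _ θ))
    rw [← adjoin_simple_toSubalgebra_of_isAlgebraic hθ] at hle
    exact hle (hc i)
  have hpad : ∑ j ∈ Finset.range d, h j • θ ^ j =
      ∑ j : Fin m.natDegree, (if (j : ℕ) < d then h j else 0) • b j := by
    rw [← Finset.sum_range fun j => (if j < d then h j else 0) • θ ^ j]
    refine Finset.sum_subset_zero_on_sdiff (Finset.range_subset_range.2 hd) (fun j hj => ?_)
      fun j hj => by rw [if_pos (Finset.mem_range.1 hj)]
    rw [if_neg (by grind), zero_smul]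
  rw [hpad] at hsum
  simpa [hj] using (isAlgebraic_coord_of_eq_sum_mul_pow_card_pow F hb
    (fun j => A.pow_mem (Algebra.self_mem_adjoin_singleton _ θ) _) hA hcA hsum
    ⟨j, hj.trans_le hd⟩).restrictScalars k

end Coordinates

section SimpleAdjoin

variable {F L L' : Type*} [Field F] [Field L] [Field L'] [Algebra F L] [Algebra F L']

lemma isAlgebraic_adjoin_iff_mem_matroid_closure {s : Set L} {f : L} :
    IsAlgebraic (IntermediateField.adjoin F s) f ↔
      f ∈ (AlgebraicIndependent.matroid F L).closure s := by
  rw [AlgebraicIndependent.matroid_closure_eq, IntermediateField.isAlgebraic_adjoin_iff]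
  rfl

lemma isAlgebraic_adjoin_simple_congr {a b f : L} (hb : Transcendental F b)
    (hab : IsAlgebraic F⟮a⟯ b) : IsAlgebraic F⟮a⟯ f ↔ IsAlgebraic F⟮b⟯ f := by
  have hb' : b ∉ (AlgebraicIndependent.matroid F L).closure ∅ := by
    rw [← isAlgebraic_adjoin_iff_mem_matroid_closure, IntermediateField.adjoin_empty]
    exact fun h => hb (h.restrictScalars F)
  simp only [isAlgebraic_adjoin_iff_mem_matroid_closure, ← insert_empty_eq] at hab ⊢
  rw [Matroid.closure_insert_congr ⟨hab, hb'⟩]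

lemma isAlgebraic_adjoin_simple_map_iff (σ : L →ₐ[F] L') {a h : L} :
    IsAlgebraic F⟮σ a⟯ (σ h) ↔ IsAlgebraic F⟮a⟯ h := by
  rw [← Set.image_singleton, ← IntermediateField.adjoin_map]
  exact isAlgebraic_ringHom_iff_of_comp_eq (F⟮a⟯.equivMap σ) σ σ.injective rfl

end SimpleAdjoin

section RatFuncAdjoin

variable {F : Type*} [Field F]

/-- The inclusion of the rational functions into the Laurent series, as an `F`-algebra map. -/
noncomputable def ratFuncToLaurentSeries (F : Type*) [Field F] : F⟮X⟯ →ₐ[F] F⸨X⸩ :=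
  { algebraMap F⟮X⟯ F⸨X⸩ with
    commutes' := fun a => by
      simp [HahnSeries.algebraMap_apply', PowerSeries.algebraMap_apply', ← RatFunc.algebraMap_C,
        ← IsScalarTower.algebraMap_apply (Polynomial F) F⟮X⟯ F⸨X⸩] }

lemma fieldRange_ratFuncToLaurentSeries :
    (ratFuncToLaurentSeries F).fieldRange = F⟮(HahnSeries.single 1 1 : F⸨X⸩)⟯ := by
  rw [AlgHom.fieldRange_eq_map, ← RatFunc.adjoin_X, IntermediateField.adjoin_map,
    Set.image_singleton, ← RatFunc.coe_X]
  rfl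

lemma algebraMap_ratFunc_mem_adjoin_single (r : F⟮X⟯) :
    algebraMap F⟮X⟯ F⸨X⸩ r ∈ F⟮(HahnSeries.single 1 1 : F⸨X⸩)⟯ := by
  rw [← fieldRange_ratFuncToLaurentSeries]
  exact ⟨r, rfl⟩

lemma isAlgebraic_ratFunc_iff_adjoin_single {f : F⸨X⸩} :
    IsAlgebraic F⟮X⟯ f ↔ IsAlgebraic F⟮(HahnSeries.single 1 1 : F⸨X⸩)⟯ f := by
  rw [← fieldRange_ratFuncToLaurentSeries]
  exact (isAlgebraic_ringHom_iff_of_comp_eq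
    (AlgEquiv.ofInjectiveField (ratFuncToLaurentSeries F)) (RingHom.id F⸨X⸩)
    Function.injective_id rfl).symm

end RatFuncAdjoin

section Substitution

variable {F : Type*} [Field F]

lemma algebraMap_laurentSeries_eq_C (a : F) : algebraMap F F⸨X⸩ a = HahnSeries.C a := by
  simp [HahnSeries.algebraMap_apply']

lemma transcendental_of_order_ne_zero {f : F⸨X⸩} (hf : f.order ≠ 0) : Transcendental F f := by
  have hf0 : f ≠ 0 := by rintro rfl; exact hf HahnSeries.order_zero
  refine transcendental_iff.2 fun P hP => Polynomial.ext fun i => ?_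
  simp only [Polynomial.aeval_def, Polynomial.eval₂_eq_sum_range, algebraMap_laurentSeries_eq_C]
    at hP
  have horder (i : ℕ) (hi : HahnSeries.C (P.coeff i) * f ^ i ≠ 0) :
      (HahnSeries.C (P.coeff i) * f ^ i).order = i * f.order := by
    rw [HahnSeries.order_mul (left_ne_zero_of_mul hi) (right_ne_zero_of_mul hi),
      HahnSeries.order_C, zero_add, HahnSeries.order_pow, nsmul_eq_mul]
  have hzero := hahnSeries_eq_zero_of_sum_eq_zero (fun i _ j _ hi hj hij => by
    rw [horder i hi, horder j hj] at hij
    exact_mod_cast mul_right_cancel₀ hf hij) hP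
  by_contra hi
  have := hzero i (Finset.mem_range_succ_iff.2 (Polynomial.le_natDegree_of_ne_zero hi))
  simp_all

lemma exists_powerSeries_coe_eq {f : F⸨X⸩} (hf : 0 ≤ f.order) : ∃ g : F⟦X⟧, (g : F⸨X⸩) = f := by
  obtain ⟨n, hn⟩ := Int.eq_ofNat_of_zero_le hf
  exact ⟨PowerSeries.X ^ n * f.powerSeriesPart,
    LaurentSeries.X_order_mul_powerSeriesPart hn.symm⟩

lemma zero_le_order_coe_powerSeries (f : F⟦X⟧) : 0 ≤ (f : F⸨X⸩).order := by
  by_contra! h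
  have hcoeff : (f : F⸨X⸩).coeff (f : F⸨X⸩).order = 0 := by
    rw [PowerSeries.coeff_coe, if_pos h]
  rw [HahnSeries.coeff_order_eq_zero.1 hcoeff, HahnSeries.order_zero] at h
  exact h.false

lemma order_coe_unit_powerSeries (u : F⟦X⟧ˣ) : ((u : F⟦X⟧) : F⸨X⸩).order = 0 := by
  have hmul : ((u : F⟦X⟧) : F⸨X⸩) * ((u⁻¹ : F⟦X⟧ˣ) : F⟦X⟧) = 1 := by
    rw [← PowerSeries.coe_mul, u.mul_inv, PowerSeries.coe_one]
  have horder := congrArg HahnSeries.order hmul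
  rw [HahnSeries.order_mul (left_ne_zero_of_mul_eq_one hmul) (right_ne_zero_of_mul_eq_one hmul),
    HahnSeries.order_one] at horder
  have h₁ := zero_le_order_coe_powerSeries (u : F⟦X⟧)
  have h₂ := zero_le_order_coe_powerSeries ((u⁻¹ : F⟦X⟧ˣ) : F⟦X⟧)
  omega

lemma order_coe_unit_mul_pow (u : F⟦X⟧ˣ) {b : F⟦X⟧} (hb : b ≠ 0) (n : ℕ) :
    ((u * b ^ n : F⟦X⟧) : F⸨X⸩).order = n * (b : F⸨X⸩).order := by
  have hcoe {a : F⟦X⟧} (ha : a ≠ 0) : (a : F⸨X⸩) ≠ 0 :=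
    (map_ne_zero_iff _ HahnSeries.ofPowerSeries_injective).2 ha
  rw [PowerSeries.coe_mul, PowerSeries.coe_pow,
    HahnSeries.order_mul (hcoe u.ne_zero) (pow_ne_zero n (hcoe hb)), order_coe_unit_powerSeries,
    zero_add, HahnSeries.order_pow, nsmul_eq_mul]

lemma order_coe_map_powerSeries (φ : F⟦X⟧ →+* F⟦X⟧) (hφ : φ PowerSeries.X ≠ 0) {a : F⟦X⟧}
    (ha : a ≠ 0) :
    φ a ≠ 0 ∧ (φ a : F⸨X⸩).order = (φ PowerSeries.X : F⸨X⸩).order * (a : F⸨X⸩).order := by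
  obtain ⟨n, u, rfl⟩ := IsDiscreteValuationRing.eq_unit_mul_pow_irreducible ha
    PowerSeries.X_irreducible
  have hmap : φ ((u : F⟦X⟧) * PowerSeries.X ^ n) =
      (Units.map (φ : F⟦X⟧ →* F⟦X⟧) u : F⟦X⟧ˣ) * φ PowerSeries.X ^ n := by simp
  refine ⟨hmap ▸ mul_ne_zero (Units.ne_zero _) (pow_ne_zero n hφ), ?_⟩
  rw [hmap, order_coe_unit_mul_pow _ hφ, order_coe_unit_mul_pow _ PowerSeries.X_ne_zero,
    PowerSeries.coe_X, HahnSeries.order_single one_ne_zero, mul_one, mul_comm]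

lemma order_laurentSeries_div {a b : F⸨X⸩} (ha : a ≠ 0) (hb : b ≠ 0) :
    (a / b).order = a.order - b.order := by
  have hmul := HahnSeries.order_mul (div_ne_zero ha hb) hb
  rw [div_mul_cancel₀ a hb] at hmul
  omega

lemma order_map_laurentSeries (τ : F⸨X⸩ →+* F⸨X⸩) {m : ℤ}
    (hτ : ∀ a : F⟦X⟧, a ≠ 0 → (τ a).order = m * (a : F⸨X⸩).order) (h : F⸨X⸩) :
    (τ h).order = m * h.order := by
  by_cases h0 : h = 0
  · simp [h0]
  obtain ⟨a, b, -, rfl⟩ := IsFractionRing.div_surjective (A := F⟦X⟧) h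
  obtain ⟨ha, hb⟩ := div_ne_zero_iff.1 h0
  rw [map_div₀, order_laurentSeries_div (τ.injective.ne_iff' (map_zero τ) |>.2 ha)
    (τ.injective.ne_iff' (map_zero τ) |>.2 hb), order_laurentSeries_div ha hb, mul_sub]
  congr 1
  exacts [hτ a fun h => ha (by simp [h]), hτ b fun h => hb (by simp [h])]

theorem exists_algHom_order_eq_mul {γ : F⸨X⸩} (hγ : 0 < γ.order) :
    ∃ σ : F⸨X⸩ →ₐ[F] F⸨X⸩,
      σ (HahnSeries.single 1 1) = γ ∧ ∀ h, (σ h).order = γ.order * h.order := by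
  obtain ⟨g, rfl⟩ := exists_powerSeries_coe_eq hγ.le
  have hg : PowerSeries.constantCoeff g = 0 := by
    rw [← PowerSeries.coeff_zero_eq_constantCoeff_apply, ← LaurentSeries.coeff_coe_powerSeries]
    exact HahnSeries.coeff_eq_zero_of_lt_order hγ
  have hg0 : g ≠ 0 := by rintro rfl; simp at hγ
  let φ : F⟦X⟧ →ₐ[F] F⟦X⟧ :=
    PowerSeries.substAlgHom (PowerSeries.HasSubst.of_constantCoeff_zero' hg)
  have hφX : φ PowerSeries.X = g := PowerSeries.substAlgHom_X _
  have hφ {a : F⟦X⟧} (ha : a ≠ 0) :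
      φ a ≠ 0 ∧ (φ a : F⸨X⸩).order = (g : F⸨X⸩).order * (a : F⸨X⸩).order :=
    hφX ▸ order_coe_map_powerSeries φ (by simpa [hφX] using hg0) ha
  have hinj : Function.Injective ((HahnSeries.ofPowerSeries ℤ F).comp φ.toRingHom) :=
    HahnSeries.ofPowerSeries_injective.comp
      ((injective_iff_map_eq_zero φ).2 fun a ha => of_not_not fun h => (hφ h).1 ha)
  let τ : F⸨X⸩ →+* F⸨X⸩ := IsFractionRing.lift hinj
  have hτ (a : F⟦X⟧) : τ a = φ a := IsFractionRing.lift_algebraMap hinj a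
  refine ⟨{ τ with commutes' := fun a => (hτ _).trans (by rw [φ.commutes]; rfl) }, ?_, fun h => ?_⟩
  · rw [← PowerSeries.coe_X, ← hφX]
    exact hτ _
  · exact order_map_laurentSeries τ (fun a ha => hτ a ▸ (hφ ha).2) h

end Substitution

section Digits

variable {F : Type*} [Field F]

lemma le_order_of_forall_coeff_eq_zero {f : F⸨X⸩} {m : ℤ} (hm : m ≤ 0)
    (hf : ∀ n < m, f.coeff n = 0) : m ≤ f.order := by
  by_contra! hlt
  rw [HahnSeries.coeff_order_eq_zero.1 (hf _ hlt), HahnSeries.order_zero] at hlt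
  omega

lemma le_order_mul {f g : F⸨X⸩} {m n : ℤ} (hmn : m + n ≤ 0) (hf : m ≤ f.order) (hg : n ≤ g.order) :
    m + n ≤ (f * g).order := by
  by_cases hfg : f * g = 0
  · simpa [hfg] using hmn
  rw [HahnSeries.order_mul (left_ne_zero_of_mul hfg) (right_ne_zero_of_mul hfg)]
  exact add_le_add hf hg

lemma coeff_betaT (β x : F⸨X⸩) (n : ℤ) :
    (betaT β x).coeff n = if n ≤ 0 then 0 else (β * x).coeff n := by
  rw [betaT, HahnSeries.coeff_sub, intPart]
  split_ifs <;> simp [*]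

lemma zero_le_order_betaT (β x : F⸨X⸩) : 0 ≤ (betaT β x).order :=
  le_order_of_forall_coeff_eq_zero le_rfl fun n hn => by rw [coeff_betaT, if_pos hn.le]

lemma zero_le_order_iterate_betaT (β : F⸨X⸩) {x : F⸨X⸩} (hx : 0 ≤ x.order) (n : ℕ) :
    0 ≤ ((betaT β)^[n] x).order := by
  induction n with
  | zero => exact hx
  | succ n _ => rw [Function.iterate_succ_apply']; exact zero_le_order_betaT _ _

lemma intPart_eq_sum_single {y : F⸨X⸩} {d : ℕ} (hy : -(d : ℤ) ≤ y.order) :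
    intPart y = ∑ j ∈ Finset.range (d + 1), HahnSeries.single (-(j : ℤ)) (y.coeff (-j)) := by
  ext n
  simp only [intPart, HahnSeries.coeff_sum, HahnSeries.coeff_single]
  split_ifs with hn
  · obtain ⟨i, rfl⟩ := Int.exists_eq_neg_ofNat hn
    by_cases hi : i ≤ d
    · simp [hi]
    · rw [HahnSeries.coeff_eq_zero_of_lt_order (by omega)]
      exact (Finset.sum_eq_zero fun j hj => if_neg (by grind)).symm
  · exact (Finset.sum_eq_zero fun j _ => if_neg (by omega)).symm

lemma betaDigits_eq_sum_single {β x : F⸨X⸩} {d : ℕ} (hd : β.order = -d) (hx : 0 ≤ x.order) (n : ℕ) :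
    betaDigits β x n = ∑ j ∈ Finset.range (d + 1),
      HahnSeries.single (-(j : ℤ)) ((betaDigits β x n).coeff (-j)) := by
  have hy : -(d : ℤ) ≤ (β * (betaT β)^[n] x).order := by
    simpa using le_order_mul (by simp) hd.ge (zero_le_order_iterate_betaT β hx n)
  simpa [betaDigits, intPart] using intPart_eq_sum_single hy

/-- The generating series of the coefficients of `z ^ j` (with `z = X⁻¹`) in the digits of the
`β`-expansion of `x`; the digits of a `β` of degree `d` are determined by those with `j ≤ d`. -/
noncomputable def digitSeries (β x : F⸨X⸩) (j : ℕ) : F⟦X⟧ :=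
  PowerSeries.mk fun n => (betaDigits β x n).coeff (-j)

lemma betaDigits_zero_coeff (β x : F⸨X⸩) (j : ℕ) :
    (betaDigits β x 0).coeff (-j) = (β * x).coeff (-j) := by
  simp [betaDigits, intPart]

lemma digitSeries_eq_C_add_X_mul (β x : F⸨X⸩) (j : ℕ) :
    digitSeries β x j =
      PowerSeries.C ((β * x).coeff (-j)) + PowerSeries.X * digitSeries β (betaT β x) j := by
  ext n
  cases n with
  | zero => simp [digitSeries, betaDigits_zero_coeff]
  | succ n => simp [digitSeries, betaDigits, PowerSeries.coeff_succ_X_mul]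

lemma digitSeries_eq_C {β x : F⸨X⸩} {d : ℕ} (hd : β.order = -d) :
    digitSeries β x d = PowerSeries.C ((β * x).coeff (-d)) := by
  have hzero (y : F⸨X⸩) : (β * betaT β y).coeff (-d) = 0 := by
    by_cases h0 : β * betaT β y = 0
    · simp [h0]
    have hpos : (betaT β y).order ≠ 0 := fun h =>
      HahnSeries.coeff_order_eq_zero.not.2 (right_ne_zero_of_mul h0) (by simp [coeff_betaT, h])
    have hnonneg := zero_le_order_betaT β y
    refine HahnSeries.coeff_eq_zero_of_lt_order ?_
    rw [HahnSeries.order_mul (left_ne_zero_of_mul h0) (right_ne_zero_of_mul h0)]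
    omega
  ext n
  cases n with
  | zero => simp [digitSeries, betaDigits_zero_coeff]
  | succ n =>
    simp [digitSeries, betaDigits, intPart, Function.iterate_succ_apply', hzero,
      -Function.iterate_succ]

theorem isKAutomatic_betaDigits_iff [Finite F] (p : ℕ) [CharP F p] {β x : F⸨X⸩} {d : ℕ}
    (hd : β.order = -d) (hx : 0 ≤ x.order) :
    IsKAutomatic p (betaDigits β x) ↔
      ∀ j ≤ d, IsAlgebraic F⟮X⟯ (digitSeries β x j : F⸨X⸩) := by
  simp only [digitSeries, ← isKAutomatic_iff_isAlgebraic_mk p]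
  refine ⟨fun h j _ => h.comp fun y => y.coeff (-j), fun h => ?_⟩
  have hpi := (IsKAutomatic.pi fun j : Fin (d + 1) => h j (Fin.is_le j)).comp
    fun v => ∑ j : Fin (d + 1), HahnSeries.single (-(j : ℤ)) (v j)
  convert hpi using 2 with n
  rw [← Finset.sum_range fun j => HahnSeries.single (-(j : ℤ)) ((betaDigits β x n).coeff (-j))]
  exact betaDigits_eq_sum_single hd hx n

lemma eq_zero_of_forall_eq_mul {γ : F⸨X⸩} (hγ : 0 < γ.order) {α : Type*} {T : α → α} {R : α → F⸨X⸩}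
    {s : Set α} (hT : Set.MapsTo T s s) (hR : ∀ a ∈ s, R a = γ * R (T a)) {m : ℤ}
    (hm : ∀ a ∈ s, m ≤ (R a).order) {a : α} (ha : a ∈ s) : R a = 0 := by
  have hγ0 : γ ≠ 0 := by rintro rfl; simp at hγ
  have hlow (n : ℕ) : ∀ a ∈ s, R a ≠ 0 → m + n ≤ (R a).order := by
    induction n with
    | zero => simpa using fun a ha _ => hm a ha
    | succ n ih =>
      intro a ha hne
      rw [hR a ha] at hne ⊢
      rw [HahnSeries.order_mul hγ0 (right_ne_zero_of_mul hne)]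
      have := ih (T a) (hT ha) (right_ne_zero_of_mul hne)
      push_cast
      omega
  by_contra hne
  have := hlow ((R a).order - m + 1).toNat a ha hne
  omega

section Expansion

variable {β : F⸨X⸩} {d : ℕ} {σ : F⸨X⸩ →ₐ[F] F⸨X⸩}

lemma single_mul_map_digitSeries (hσ : σ (HahnSeries.single 1 1) = β⁻¹) (x : F⸨X⸩) (j : ℕ) :
    HahnSeries.single (-(j : ℤ)) 1 * σ (digitSeries β x j) =
      HahnSeries.single (-(j : ℤ)) ((β * x).coeff (-j)) +
        β⁻¹ * (HahnSeries.single (-(j : ℤ)) 1 * σ (digitSeries β (betaT β x) j)) := by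
  have hC (a : F) : σ (PowerSeries.C a : F⸨X⸩) = HahnSeries.C a := by
    rw [PowerSeries.coe_C, ← algebraMap_laurentSeries_eq_C, σ.commutes]
  have hsingle : HahnSeries.single (-(j : ℤ)) 1 * HahnSeries.C ((β * x).coeff (-j)) =
      HahnSeries.single (-(j : ℤ)) ((β * x).coeff (-j)) := by
    simp [HahnSeries.C_apply]
  rw [digitSeries_eq_C_add_X_mul, PowerSeries.coe_add, PowerSeries.coe_mul, map_add, map_mul,
    PowerSeries.coe_X, hσ, hC, mul_add, hsingle, mul_left_comm]

lemma sum_single_mul_map_digitSeries (hd : β.order = -d)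
    (hσ : σ (HahnSeries.single 1 1) = β⁻¹) {x : F⸨X⸩} (hx : 0 ≤ x.order) :
    ∑ j ∈ Finset.range (d + 1), HahnSeries.single (-(j : ℤ)) 1 * σ (digitSeries β x j) =
      intPart (β * x) + β⁻¹ * ∑ j ∈ Finset.range (d + 1),
        HahnSeries.single (-(j : ℤ)) 1 * σ (digitSeries β (betaT β x) j) := by
  have hβx : -(d : ℤ) ≤ (β * x).order := by simpa using le_order_mul (by simp) hd.ge hx
  rw [intPart_eq_sum_single hβx, Finset.mul_sum, ← Finset.sum_add_distrib]
  exact Finset.sum_congr rfl fun j _ => single_mul_map_digitSeries hσ x j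

lemma neg_le_order_mul_sub_sum (hd : β.order = -d) (hσord : ∀ h, (σ h).order = d * h.order)
    {x : F⸨X⸩} (hx : 0 ≤ x.order) (D : ℕ → F⟦X⟧) :
    -(d : ℤ) ≤ (β * x - ∑ j ∈ Finset.range (d + 1),
      HahnSeries.single (-(j : ℤ)) 1 * σ (D j)).order := by
  refine le_order_of_forall_coeff_eq_zero (by simp) fun n hn => ?_
  have hβx : -(d : ℤ) ≤ (β * x).order := by simpa using le_order_mul (by simp) hd.ge hx
  rw [HahnSeries.coeff_sub, HahnSeries.coeff_sum,
    HahnSeries.coeff_eq_zero_of_lt_order (hn.trans_le hβx), zero_sub, neg_eq_zero]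
  refine Finset.sum_eq_zero fun j hj => HahnSeries.coeff_eq_zero_of_lt_order ?_
  have hσ : 0 ≤ (σ (D j)).order := by
    rw [hσord]
    exact mul_nonneg (by simp) (zero_le_order_coe_powerSeries _)
  have := le_order_mul (by simp) (HahnSeries.order_single (one_ne_zero (α := F))).ge hσ (m := -j)
  grind

theorem mul_eq_sum_single_mul_map_digitSeries (hd : β.order = -d) (hd0 : 0 < d)
    (hσ : σ (HahnSeries.single 1 1) = β⁻¹) (hσord : ∀ h, (σ h).order = d * h.order) {x : F⸨X⸩}
    (hx : 0 ≤ x.order) :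
    β * x = ∑ j ∈ Finset.range (d + 1),
      HahnSeries.single (-(j : ℤ)) 1 * σ (digitSeries β x j) := by
  let R (y : F⸨X⸩) : F⸨X⸩ := β * y - ∑ j ∈ Finset.range (d + 1),
    HahnSeries.single (-(j : ℤ)) 1 * σ (digitSeries β y j)
  have hβ0 : β ≠ 0 := ne_of_apply_ne HahnSeries.order (by simp; omega)
  have hR (y : F⸨X⸩) (hy : 0 ≤ y.order) : R y = β⁻¹ * R (betaT β y) := by
    simp only [R]
    rw [sum_single_mul_map_digitSeries hd hσ hy, mul_sub, inv_mul_cancel_left₀ hβ0, betaT]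
    ring
  have hγ : 0 < (β⁻¹).order := by
    rw [← hσ, hσord, HahnSeries.order_single one_ne_zero]
    omega
  have hRx : R x = 0 := eq_zero_of_forall_eq_mul hγ (s := {y : F⸨X⸩ | 0 ≤ y.order})
    (fun y _ => zero_le_order_betaT β y) hR
    (fun y hy => neg_le_order_mul_sub_sum hd hσord hy (digitSeries β y)) hx
  exact sub_eq_zero.1 hRx

end Expansion

end Digits

section Transfer

lemma isAlgebraic_of_sum_mul_pow_eq {k L : Type*} [Field k] [Field L] [Algebra k L] {d : ℕ}
    (hd : 0 < d) {a : ℕ → L} (ha : ∀ j ≤ d, IsAlgebraic k (a j)) (had : a d ≠ 0) {b θ : L}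
    (hb : IsAlgebraic k b) (hsum : ∑ j ∈ Finset.range (d + 1), a j * θ ^ j = b) :
    IsAlgebraic k θ := by
  let E := algebraicClosure k L
  let coeff (j : Fin (d + 1)) : E := ⟨a j, mem_algebraicClosure_iff.2 (ha j j.is_le)⟩
  let P : Polynomial E := ∑ j : Fin (d + 1), Polynomial.monomial j (coeff j) -
    Polynomial.C ⟨b, mem_algebraicClosure_iff.2 hb⟩
  have hP : P ≠ 0 := by
    refine fun h => had ?_
    have hcoeff : P.coeff d = coeff (Fin.last d) := by
      simp only [P, Polynomial.coeff_sub, Polynomial.finsetSum_coeff, Polynomial.coeff_monomial,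
        Polynomial.coeff_C, if_neg hd.ne', sub_zero]
      exact (Fintype.sum_eq_single (Fin.last d) fun j hj => if_neg (by grind)).trans (if_pos rfl)
    rw [h, Polynomial.coeff_zero] at hcoeff
    exact congrArg Subtype.val hcoeff.symm
  refine IsAlgebraic.restrictScalars k (S := E) ⟨P, hP, ?_⟩
  simp only [P, map_sub, map_sum, Polynomial.aeval_monomial, Polynomial.aeval_C]
  rw [Finset.sum_range] at hsum
  exact sub_eq_zero.2 hsum

variable {F : Type*} [Field F]

lemma single_neg_one_pow (i : ℕ) :
    (HahnSeries.single (-1) 1 : F⸨X⸩) ^ i = HahnSeries.single (-(i : ℤ)) 1 := by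
  rw [HahnSeries.single_pow, one_pow, nsmul_eq_mul, mul_neg_one]

lemma le_natDegree_minpoly_single_of_dvd_order {k : Type*} [Field k] [Algebra k F⸨X⸩]
    {K : IntermediateField k F⸨X⸩} {d : ℕ} (hK : ∀ a ∈ K, (d : ℤ) ∣ a.order)
    (hz : IsAlgebraic K (HahnSeries.single (-1) 1 : F⸨X⸩)) :
    d ≤ (minpoly K (HahnSeries.single (-1) 1 : F⸨X⸩)).natDegree := by
  let m := minpoly K (HahnSeries.single (-1) 1 : F⸨X⸩)
  refine not_lt.1 fun hlt : m.natDegree < d => ?_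
  have hm : ∑ i ∈ Finset.range (m.natDegree + 1),
      HahnSeries.single (-(i : ℤ)) 1 * (m.coeff i : F⸨X⸩) = 0 := by
    rw [← minpoly.aeval K (HahnSeries.single (-1) 1 : F⸨X⸩), Polynomial.aeval_eq_sum_range]
    refine Finset.sum_congr rfl fun i _ => ?_
    rw [Algebra.smul_def, mul_comm, single_neg_one_pow]
    rfl
  have hzero := laurentSeries_eq_zero_of_sum_single_mul_eq_zero (d := d)
    (e := fun i : ℕ => -(i : ℤ)) (fun i hi j hj hij => ?_)
    (fun i _ => hK _ (m.coeff i).2) hm m.natDegree (by simp)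
  · have hlead : m.leadingCoeff = 1 := minpoly.monic hz.isIntegral
    rw [Polynomial.coeff_natDegree, hlead] at hzero
    exact one_ne_zero hzero
  · rw [Finset.mem_range] at hi hj
    have := Int.eq_zero_of_abs_lt_dvd hij (by rw [abs_lt]; omega)
    omega

theorem isAlgebraic_of_isAlgebraic_sum_single_mul_map [Finite F] {d : ℕ} {σ : F⸨X⸩ →ₐ[F] F⸨X⸩}
    (hσord : ∀ h, (σ h).order = d * h.order)
    (hX : IsAlgebraic F⟮σ (HahnSeries.single 1 1)⟯ (HahnSeries.single 1 1 : F⸨X⸩)) {D : ℕ → F⸨X⸩}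
    (hf : IsAlgebraic F⟮X⟯ (∑ j ∈ Finset.range d, HahnSeries.single (-(j : ℤ)) 1 * σ (D j))) {j : ℕ}
    (hj : j < d) : IsAlgebraic F⟮X⟯ (D j) := by
  have := Fintype.ofFinite F
  let z : F⸨X⸩ := HahnSeries.single (-1) 1
  have hzinv : z⁻¹ = HahnSeries.single 1 1 := by simp [z, HahnSeries.inv_single]
  let k := F⟮σ (HahnSeries.single 1 1)⟯
  have hk : k ≤ σ.fieldRange := IntermediateField.adjoin_simple_le_iff.2 ⟨_, rfl⟩
  let K : IntermediateField k F⸨X⸩ := IntermediateField.extendScalars hk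
  have hz : IsAlgebraic k z := IsAlgebraic.inv_iff.1 (hzinv ▸ hX)
  have hdeg : d ≤ (minpoly K z).natDegree :=
    le_natDegree_minpoly_single_of_dvd_order
      (by rintro _ ⟨h, rfl⟩; exact ⟨_, hσord h⟩) (hz.tower_top K)
  let h (j : ℕ) : K := ⟨σ (D j), D j, rfl⟩
  have hsum : ∑ j ∈ Finset.range d, HahnSeries.single (-(j : ℤ)) 1 * σ (D j) =
      ∑ j ∈ Finset.range d, h j • z ^ j :=
    Finset.sum_congr rfl fun j _ => by
      rw [Algebra.smul_def, mul_comm, single_neg_one_pow]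
      rfl
  rw [hsum] at hf
  obtain ⟨n, hn⟩ := exists_mem_span_pow_card_pow hf
  obtain ⟨c, hc⟩ := (Submodule.mem_span_range_iff_exists_fun _).1 hn
  have hck (i : Fin n) : algebraMap F⟮X⟯ F⸨X⸩ (c i) ∈ k⟮z⟯ := by
    have hle : F⟮(HahnSeries.single 1 1 : F⸨X⸩)⟯ ≤ k⟮z⟯.restrictScalars F :=
      IntermediateField.adjoin_simple_le_iff.2
        (hzinv ▸ inv_mem (IntermediateField.mem_adjoin_simple_self k z))
    exact hle (algebraMap_ratFunc_mem_adjoin_single _)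
  have halg : IsAlgebraic k (h j) := isAlgebraic_coord_pow_of_eq_sum_mul_pow_card_pow F hz hdeg hck
    (by simpa [Algebra.smul_def] using hc.symm) hj
  rw [isAlgebraic_ratFunc_iff_adjoin_single, ← isAlgebraic_adjoin_simple_map_iff σ]
  exact halg.algebraMap

end Transfer

section AlgebraicExpansions

variable {F : Type*} [Field F] {β x : F⸨X⸩} {d : ℕ}

lemma order_inv_laurentSeries (f : F⸨X⸩) : f⁻¹.order = -f.order := by
  by_cases hf : f = 0
  · simp [hf]
  · rw [inv_eq_one_div, order_laurentSeries_div one_ne_zero hf, HahnSeries.order_one, zero_sub]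

lemma exists_algHom_single_eq_inv (hd : β.order = -d) (hd0 : 0 < d) :
    ∃ σ : F⸨X⸩ →ₐ[F] F⸨X⸩,
      σ (HahnSeries.single 1 1) = β⁻¹ ∧ ∀ h, (σ h).order = d * h.order := by
  have hγ : β⁻¹.order = d := by rw [order_inv_laurentSeries, hd, neg_neg]
  simpa only [hγ] using exists_algHom_order_eq_mul (γ := β⁻¹) (by omega)

lemma isAlgebraic_ratFunc_single (n : ℤ) (a : F) :
    IsAlgebraic F⟮X⟯ (HahnSeries.single n a : F⸨X⸩) := by
  have hsingle : (HahnSeries.single n a : F⸨X⸩) =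
      algebraMap F F⸨X⸩ a * HahnSeries.single 1 1 ^ n := by
    rw [algebraMap_laurentSeries_eq_C, ← RatFunc.single_zpow, HahnSeries.C_apply,
      HahnSeries.single_mul_single, zero_add, mul_one]
  have hmem : (HahnSeries.single n a : F⸨X⸩) ∈ F⟮(HahnSeries.single 1 1 : F⸨X⸩)⟯ :=
    hsingle ▸ mul_mem (IntermediateField.algebraMap_mem _ a)
      (zpow_mem (IntermediateField.mem_adjoin_simple_self F _) n)
  rw [isAlgebraic_ratFunc_iff_adjoin_single]
  exact isAlgebraic_algebraMap (⟨_, hmem⟩ : F⟮(HahnSeries.single 1 1 : F⸨X⸩)⟯)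

lemma isAlgebraic_ratFunc_iff_adjoin_inv (hβ : β.order ≠ 0) (halg : IsAlgebraic F⟮X⟯ β)
    {f : F⸨X⸩} : IsAlgebraic F⟮X⟯ f ↔ IsAlgebraic F⟮β⁻¹⟯ f := by
  have hinv : Transcendental F β⁻¹ :=
    fun h => transcendental_of_order_ne_zero hβ (IsAlgebraic.inv_iff.1 h)
  rw [isAlgebraic_ratFunc_iff_adjoin_single]
  exact isAlgebraic_adjoin_simple_congr hinv
    (isAlgebraic_ratFunc_iff_adjoin_single.1 halg.inv)

theorem isAlgebraic_digitSeries_of_isAlgebraic [Finite F] (hd : β.order = -d) (hd0 : 0 < d)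
    (hx : 0 ≤ x.order) (hβ : IsAlgebraic F⟮X⟯ β) (hxalg : IsAlgebraic F⟮X⟯ x) {j : ℕ}
    (hj : j ≤ d) : IsAlgebraic F⟮X⟯ (digitSeries β x j : F⸨X⸩) := by
  obtain ⟨σ, hσ, hσord⟩ := exists_algHom_single_eq_inv hd hd0
  have hconst : IsAlgebraic F⟮X⟯ (digitSeries β x d : F⸨X⸩) := by
    rw [digitSeries_eq_C hd, PowerSeries.coe_C, HahnSeries.C_apply]
    exact isAlgebraic_ratFunc_single 0 _
  obtain rfl | hj := hj.eq_or_lt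
  · exact hconst
  have hbase {f : F⸨X⸩} : IsAlgebraic F⟮X⟯ f ↔ IsAlgebraic F⟮σ (HahnSeries.single 1 1)⟯ f := by
    rw [hσ]
    exact isAlgebraic_ratFunc_iff_adjoin_inv (by omega) hβ
  have hσconst : IsAlgebraic F⟮X⟯ (σ (digitSeries β x d)) := by
    rwa [hbase, isAlgebraic_adjoin_simple_map_iff, ← isAlgebraic_ratFunc_iff_adjoin_single]
  have hexp := mul_eq_sum_single_mul_map_digitSeries hd hd0 hσ hσord hx
  rw [Finset.sum_range_succ, ← sub_eq_iff_eq_add] at hexp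
  refine isAlgebraic_of_isAlgebraic_sum_single_mul_map hσord
    (hbase.1 (isAlgebraic_ratFunc_single 1 1)) (D := fun j => digitSeries β x j) ?_ hj
  rw [← hexp]
  exact (hβ.mul hxalg).sub ((isAlgebraic_ratFunc_single _ 1).mul hσconst)

theorem isAlgebraic_of_isAlgebraic_digitSeries (hd : β.order = -d) (hd0 : 0 < d)
    (hx : 0 ≤ x.order) (hβ : IsAlgebraic F⟮X⟯ β)
    (hD : ∀ j ≤ d, IsAlgebraic F⟮X⟯ (digitSeries β x j : F⸨X⸩)) : IsAlgebraic F⟮X⟯ x := by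
  obtain ⟨σ, hσ, hσord⟩ := exists_algHom_single_eq_inv hd hd0
  have hσD (j : ℕ) (hj : j ≤ d) : IsAlgebraic F⟮X⟯ (σ (digitSeries β x j)) := by
    rw [isAlgebraic_ratFunc_iff_adjoin_inv (by omega) hβ, ← hσ, isAlgebraic_adjoin_simple_map_iff,
      ← isAlgebraic_ratFunc_iff_adjoin_single]
    exact hD j hj
  have hβx : IsAlgebraic F⟮X⟯ (β * x) := by
    rw [mul_eq_sum_single_mul_map_digitSeries hd hd0 hσ hσord hx]
    refine mem_algebraicClosure_iff.1 (sum_mem fun j hj => mem_algebraicClosure_iff.2 ?_)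
    exact (isAlgebraic_ratFunc_single _ 1).mul (hσD j (Finset.mem_range_succ_iff.1 hj))
  have hβ0 : β ≠ 0 := ne_of_apply_ne HahnSeries.order (by simp; omega)
  rw [← inv_mul_cancel_left₀ hβ0 x]
  exact hβ.inv.mul hβx

theorem isAlgebraic_of_isAlgebraic_digitSeries_one (hd : β.order = -d) (hd0 : 0 < d)
    (hD : ∀ j ≤ d, IsAlgebraic F⟮X⟯ (digitSeries β 1 j : F⸨X⸩)) : IsAlgebraic F⟮X⟯ β := by
  obtain ⟨σ, hσ, hσord⟩ := exists_algHom_single_eq_inv hd hd0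
  have hσD (j : ℕ) (hj : j ≤ d) : IsAlgebraic F⟮β⁻¹⟯ (σ (digitSeries β 1 j)) := by
    rw [← hσ, isAlgebraic_adjoin_simple_map_iff, ← isAlgebraic_ratFunc_iff_adjoin_single]
    exact hD j hj
  have hβ0 : β ≠ 0 := ne_of_apply_ne HahnSeries.order (by simp; omega)
  have hlead : σ (digitSeries β 1 d : F⸨X⸩) ≠ 0 := by
    rw [map_ne_zero, digitSeries_eq_C hd, PowerSeries.coe_C, mul_one, ← hd]
    exact HahnSeries.C_ne_zero (HahnSeries.coeff_order_eq_zero.not.2 hβ0)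
  have hinv : IsAlgebraic F⟮β⁻¹⟯ β⁻¹ :=
    isAlgebraic_algebraMap (IntermediateField.AdjoinSimple.gen F β⁻¹)
  have hexp := mul_eq_sum_single_mul_map_digitSeries hd hd0 hσ hσord (x := 1) (by simp)
  have hz : IsAlgebraic F⟮β⁻¹⟯ (HahnSeries.single (-1) 1 : F⸨X⸩) := by
    refine isAlgebraic_of_sum_mul_pow_eq hd0 hσD hlead (IsAlgebraic.inv_iff.1 hinv) ?_
    refine Eq.trans ?_ (hexp.symm.trans (mul_one β))
    exact Finset.sum_congr rfl fun j _ => by rw [single_neg_one_pow, mul_comm]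
  have hX : IsAlgebraic F⟮β⁻¹⟯ (HahnSeries.single 1 1 : F⸨X⸩) := by
    simpa [HahnSeries.inv_single] using hz.inv
  rw [← IsAlgebraic.inv_iff, isAlgebraic_ratFunc_iff_adjoin_single]
  exact (isAlgebraic_adjoin_simple_congr (transcendental_of_order_ne_zero (by simp)) hX).1 hinv

end AlgebraicExpansions

/-- **Theorem 4.1.** Let `β ∈ 𝔽_q((1/z))` be a formal Laurent series of positive
degree (i.e. `β.order < 0`).  Then the following are equivalent:
(i) `β` is algebraic over `𝔽_q(z)`;
(ii) `d_β(1)` is `p`-automatic;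
(iii) for every `x ∈ 𝔽_q[[1/z]]`, `d_β(x)` is `p`-automatic iff `x` is algebraic
over `𝔽_q(z)`. -/
theorem beta_expansion_tfae
    (p : ℕ) [Fact p.Prime] (F : Type*) [Field F] [Fintype F] [CharP F p]
    (β : LaurentSeries F) (hβ : β.order < 0) :
    (IsAlgebraic (RatFunc F) β ↔ IsKAutomatic p (betaDigits β 1)) ∧
      (IsAlgebraic (RatFunc F) β ↔
        ∀ x : LaurentSeries F, 0 ≤ x.order →
          (IsKAutomatic p (betaDigits β x) ↔ IsAlgebraic (RatFunc F) x)) := by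
  obtain ⟨d, hd⟩ : ∃ d : ℕ, β.order = -d := ⟨β.order.natAbs, by omega⟩
  have hd0 : 0 < d := by omega
  have one_order : 0 ≤ (1 : LaurentSeries F).order := by simp
  have algebraic_imp_iff (hβalg : IsAlgebraic (RatFunc F) β) (x : LaurentSeries F)
      (hx : 0 ≤ x.order) : IsKAutomatic p (betaDigits β x) ↔ IsAlgebraic (RatFunc F) x :=
    (isKAutomatic_betaDigits_iff p hd hx).trans
      ⟨isAlgebraic_of_isAlgebraic_digitSeries hd hd0 hx hβalg, fun hxalg _ hj =>
        isAlgebraic_digitSeries_of_isAlgebraic hd hd0 hx hβalg hxalg hj⟩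
  have automatic_one_imp (h : IsKAutomatic p (betaDigits β 1)) : IsAlgebraic (RatFunc F) β :=
    isAlgebraic_of_isAlgebraic_digitSeries_one hd hd0
      ((isKAutomatic_betaDigits_iff p hd one_order).1 h)
  exact ⟨⟨fun h => (algebraic_imp_iff h 1 one_order).2 isAlgebraic_one, automatic_one_imp⟩,
    ⟨algebraic_imp_iff, fun h => automatic_one_imp ((h 1 one_order).2 isAlgebraic_one)⟩⟩
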